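/- arXiv:1606.02803 — 2 statements merged into one kernel-verified Lean document; each statement's English description precedes it below -/
import Mathlib

section
/- Let n ≥ 1 be an integer and let H be a finite subgroup of GL(Fin n, ℚ). Then the order of H divides 2^{a(n)} · ∏_{odd primes p ≤ n+1} p^{b(n,p)}, where a(n) := n + 2·⌊n/2⌋ + ∑_{i≥2} ⌊n/2^i⌋ and b(n,p) := ∑_{i≥0} ⌊n/((p-1)·p^i)⌋. -/
open Matrix

/-!
For all but finitely many primes `l`, the entries of the elements of a finite group `G` of rational
matrices can be reduced modulo `l`, and the reduction is injective on `G`. Hence the order of `G`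
divides that of `GL (Fin n) (ZMod l)`, which up to a power of `l` is `∏ j ≤ n, (l ^ j - 1)`. By
Dirichlet's theorem on primes in arithmetic progressions, `l` may be chosen so that the `p`-adic
valuation of this product is as small as possible: for odd `p`, take `l` to be a primitive root
modulo `p ^ 2`, and for `p = 2`, take `l` congruent to `3` modulo `8`. Lifting the exponent
then computes the valuation as that of a factorial, and Legendre's formula concludes.
-/

open Filter

section Reduction

variable {ι K k : Type*} [Fintype ι] [DecidableEq ι]

/-- The group homomorphism `G → GL ι k` that applies a ring homomorphism `φ : A → k` to the entries
of the elements of a matrix group `G` whose entries lie in the subring `A`. As `G` is closed under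
inversion, its elements are automatically invertible over `A`. -/
def glMapOfEntriesMem [CommRing K] [CommRing k] {A : Subring K} (φ : A →+* k)
    {G : Subgroup (GL ι K)} (hA : ∀ g ∈ G, ∀ i j, g i j ∈ A) : G →* GL ι k :=
  MonoidHom.toHomUnits <| (φ.mapMatrix (m := ι)).toMonoidHom.comp
    { toFun := fun g ↦ .of fun i j ↦ ⟨(g : GL ι K) i j, hA g g.2 i j⟩
      map_one' := by
        ext i j
        by_cases hij : i = j <;> simp [Matrix.one_apply, hij]
      map_mul' := fun g h ↦ by
        ext i j
        simp [Matrix.mul_apply] }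

@[simp]
theorem glMapOfEntriesMem_apply [CommRing K] [CommRing k] {A : Subring K} (φ : A →+* k)
    {G : Subgroup (GL ι K)} (hA : ∀ g ∈ G, ∀ i j, g i j ∈ A) (g : G) (i j : ι) :
    glMapOfEntriesMem φ hA g i j = φ ⟨(g : GL ι K) i j, hA g g.2 i j⟩ :=
  rfl

-- A nonzero entry of `g - 1` is a unit of `A`, so it does not become zero in `k`.
theorem glMapOfEntriesMem_injective [Field K] [CommRing k] [Nontrivial k] {A : Subring K}
    (φ : A →+* k) {G : Subgroup (GL ι K)} (hA : ∀ g ∈ G, ∀ i j, g i j ∈ A)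
    (hinv : ∀ g ∈ G, ∀ i j, ((g - 1 : Matrix ι ι K) i j)⁻¹ ∈ A) :
    Function.Injective (glMapOfEntriesMem φ hA) := by
  refine (injective_iff_map_eq_one _).2 fun g hg ↦ ?_
  ext i j
  let a : A := ⟨(g : GL ι K) i j, hA g g.2 i j⟩ - ⟨(1 : GL ι K) i j, hA 1 G.one_mem i j⟩
  have hφa : φ a = 0 := by
    rw [map_sub, sub_eq_zero, ← glMapOfEntriesMem_apply φ hA g i j, hg,
      ← map_one (glMapOfEntriesMem φ hA), glMapOfEntriesMem_apply]
    rfl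
  by_contra hne
  have ha : (a : K) ≠ 0 := sub_ne_zero.2 hne
  have hunit : IsUnit a := .of_mul_eq_one ⟨_, hinv g g.2 i j⟩ (Subtype.ext (mul_inv_cancel₀ ha))
  exact (hunit.map φ).ne_zero hφa

/-- The local ring of rational numbers whose denominator does not vanish in `k`; for `k = ZMod l`
with `l` prime, this is the localization of `ℤ` at `l`. -/
def ratDenNeZero (k : Type*) [DivisionRing k] : Subring ℚ where
  carrier := {q | (q.den : k) ≠ 0}
  mul_mem' {q r} hq hr h := mul_ne_zero hq hr <| by
    obtain ⟨m, hm⟩ := Rat.mul_den_dvd q r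
    rw [← Nat.cast_mul, hm, Nat.cast_mul, h, zero_mul]
  add_mem' {q r} hq hr h := mul_ne_zero hq hr <| by
    obtain ⟨m, hm⟩ := Rat.add_den_dvd q r
    rw [← Nat.cast_mul, hm, Nat.cast_mul, h, zero_mul]
  one_mem' := by simp
  zero_mem' := by simp
  neg_mem' := by simp

/-- The cast `ℚ → k`, on the subring where it is a ring homomorphism. -/
def ratDenNeZeroCast (k : Type*) [DivisionRing k] : ratDenNeZero k →+* k where
  toFun q := (q : ℚ)
  map_one' := Rat.cast_one
  map_zero' := Rat.cast_zero
  map_mul' q r := Rat.cast_mul_of_ne_zero q.2 r.2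
  map_add' q r := Rat.cast_add_of_ne_zero q.2 r.2

theorem eventually_zmod_natCast_ne_zero {m : ℕ} (hm : m ≠ 0) :
    ∀ᶠ l : ℕ in atTop, (m : ZMod l) ≠ 0 := by
  filter_upwards [eventually_gt_atTop m] with l hl
  rw [Ne, ZMod.natCast_eq_zero_iff]
  exact Nat.not_dvd_of_pos_of_lt (Nat.pos_of_ne_zero hm) hl

theorem eventually_card_dvd_card_GL_zmod (G : Subgroup (GL ι ℚ)) [Finite G] :
    ∀ᶠ l : ℕ in atTop, l.Prime → Nat.card G ∣ Nat.card (GL ι (ZMod l)) := by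
  have hden (q : G → ι → ι → ℚ) :
      ∀ᶠ l : ℕ in atTop, ∀ g i j, ((q g i j).den : ZMod l) ≠ 0 := by
    simp only [eventually_all]
    exact fun g i j ↦ eventually_zmod_natCast_ne_zero (q g i j).den_ne_zero
  filter_upwards [hden fun g i j ↦ (g : GL ι ℚ) i j,
    hden fun g i j ↦ (((g : GL ι ℚ) - 1 : Matrix ι ι ℚ) i j)⁻¹] with l hA hinv hl
  have := Fact.mk hl
  exact Subgroup.card_dvd_of_injective _ <|
    glMapOfEntriesMem_injective (ratDenNeZeroCast (ZMod l)) (fun g hg ↦ hA ⟨g, hg⟩)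
      fun g hg ↦ hinv ⟨g, hg⟩

theorem padicValNat_card_le_of_frequently {p b : ℕ} [Fact p.Prime]
    (G : Subgroup (GL ι ℚ)) [Finite G]
    (h : ∃ᶠ l : ℕ in atTop, l.Prime ∧ padicValNat p (Nat.card (GL ι (ZMod l))) ≤ b) :
    padicValNat p (Nat.card G) ≤ b := by
  obtain ⟨l, ⟨hl, hb⟩, hdvd⟩ := (h.and_eventually (eventually_card_dvd_card_GL_zmod G)).exists
  have := Fact.mk hl
  exact ((padicValNat_dvd_iff_le Nat.card_pos.ne').1
    (pow_padicValNat_dvd.trans (hdvd hl))).trans hb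

end Reduction

section Valuation

variable {p : ℕ} [Fact p.Prime]

theorem padicValNat_eq_of_pow_dvd {m k : ℕ} (h : p ^ k ∣ m) (h' : ¬ p ^ (k + 1) ∣ m) :
    padicValNat p m = k := by
  have hm : m ≠ 0 := by rintro rfl; exact h' (dvd_zero _)
  rw [padicValNat_dvd_iff_le hm] at h h'
  omega

theorem padicValNat_prod {ι : Type*} (s : Finset ι) (f : ι → ℕ) (hf : ∀ i ∈ s, f i ≠ 0) :
    padicValNat p (∏ i ∈ s, f i) = ∑ i ∈ s, padicValNat p (f i) := by
  simp only [← Nat.factorization_def _ (Fact.out : p.Prime)]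
  rw [Nat.factorization_prod hf, Finsupp.finsetSum_apply]

theorem padicValNat_pow_sub_pow_of_not_dvd {q n i : ℕ} (hq : 1 < q) (hpq : ¬ p ∣ q) (hi : i < n) :
    padicValNat p (q ^ n - q ^ i) = padicValNat p (q ^ (n - i) - 1) := by
  have hfactor : q ^ n - q ^ i = q ^ i * (q ^ (n - i) - 1) := by
    rw [Nat.mul_sub_one, ← pow_add, Nat.add_sub_cancel' hi.le]
  have hne : q ^ (n - i) - 1 ≠ 0 :=
    Nat.sub_ne_zero_of_lt (Nat.one_lt_pow (Nat.sub_ne_zero_of_lt hi) hq)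
  rw [hfactor, padicValNat.mul (by positivity) hne,
    padicValNat.eq_zero_of_not_dvd (mt (Fact.out : p.Prime).dvd_of_dvd_pow hpq), zero_add]

theorem padicValNat_card_GL (F : Type*) [Field F] [Fintype F] (hp : ¬ p ∣ Fintype.card F) (n : ℕ) :
    padicValNat p (Nat.card (GL (Fin n) F)) =
      ∑ j ∈ Finset.range n, padicValNat p (Fintype.card F ^ (j + 1) - 1) := by
  set q := Fintype.card F
  have hq : 1 < q := Fintype.one_lt_card
  rw [card_GL_field, padicValNat_prod _ _ fun i _ ↦
      Nat.sub_ne_zero_of_lt (Nat.pow_lt_pow_right hq i.is_lt),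
    Fin.sum_univ_eq_sum_range (fun i ↦ padicValNat p (q ^ n - q ^ i)) n, ← Finset.sum_range_reflect]
  refine Finset.sum_congr rfl fun j hj ↦ ?_
  rw [Finset.mem_range] at hj
  rw [padicValNat_pow_sub_pow_of_not_dvd hq hp (by omega)]
  congr 3
  omega

theorem padicValNat_pow_sub_one_of_not_dvd {l j : ℕ} (hl : 1 < l) (hpl : p ∣ l - 1)
    (hj : ¬ p ∣ j) : padicValNat p (l ^ j - 1) = padicValNat p (l - 1) := by
  have hcast : (l : ZMod p) = 1 := by
    rwa [← ZMod.natCast_eq_zero_iff, Nat.cast_sub hl.le, Nat.cast_one, sub_eq_zero] at hpl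
  have hgeom : ¬ p ∣ ∑ i ∈ Finset.range j, l ^ i := by
    rw [← ZMod.natCast_eq_zero_iff] at hj ⊢
    simpa [hcast] using hj
  have hsum : ∑ i ∈ Finset.range j, l ^ i ≠ 0 := fun h ↦ hgeom (h ▸ dvd_zero p)
  rw [← geom_sum_mul_of_one_le hl.le j,
    padicValNat.mul hsum (Nat.sub_ne_zero_of_lt hl),
    padicValNat.eq_zero_of_not_dvd hgeom, zero_add]

-- The terms on the left are there to avoid truncated subtraction, here and in the sum over `j`.
theorem padicValNat_two_pow_sub_one_add {l j : ℕ} (hl : 1 < l) (hodd : Odd l) (hj : j ≠ 0) :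
    padicValNat 2 (l ^ j - 1) + (if 2 ∣ j then 1 else 0) =
      padicValNat 2 (l - 1) + padicValNat 2 j + if 2 ∣ j then padicValNat 2 (l + 1) else 0 := by
  split_ifs with h2
  · have := padicValNat.pow_two_sub_one hl hodd.not_two_dvd_nat hj (even_iff_two_dvd.2 h2)
    omega
  · rw [padicValNat_pow_sub_one_of_not_dvd hl (hodd.tsub_odd odd_one).two_dvd h2,
      padicValNat.eq_zero_of_not_dvd h2]

theorem sum_padicValNat_two_pow_sub_one_add {l : ℕ} (hl : 1 < l) (hodd : Odd l) (n : ℕ) :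
    ∑ j ∈ Finset.range n, padicValNat 2 (l ^ (j + 1) - 1) + n / 2 =
      n * padicValNat 2 (l - 1) + padicValNat 2 n.factorial + n / 2 * padicValNat 2 (l + 1) := by
  induction n with
  | zero => simp
  | succ n ih =>
    have := padicValNat_two_pow_sub_one_add hl hodd n.succ_ne_zero
    rw [Finset.sum_range_succ, Nat.factorial_succ,
      padicValNat.mul n.succ_ne_zero n.factorial_ne_zero, Nat.succ_div]
    split_ifs at this ⊢ <;> grind

theorem dvd_pow_sub_one_iff_orderOf_dvd {m l : ℕ} (hl : l ≠ 0) (j : ℕ) :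
    m ∣ l ^ j - 1 ↔ orderOf (l : ZMod m) ∣ j := by
  rw [orderOf_dvd_iff_pow_eq_one, ← ZMod.natCast_eq_zero_iff,
    Nat.cast_sub (Nat.one_le_pow _ _ (Nat.pos_of_ne_zero hl)), sub_eq_zero]
  simp

theorem padicValNat_pow_mul_sub_one {l c m : ℕ} (hp : Odd p) (hl : 1 < l) (hc : c ≠ 0)
    (hpl : p ∣ l ^ c - 1) (hm : m ≠ 0) :
    padicValNat p (l ^ (c * m) - 1) = padicValNat p (l ^ c - 1) + padicValNat p m := by
  have hlc : 1 < l ^ c := Nat.one_lt_pow hc hl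
  have hpl' : ¬ p ∣ l ^ c := fun h ↦ (Fact.out : p.Prime).one_lt.ne' <|
    Nat.dvd_one.1 ((Nat.dvd_sub_iff_right hlc.le h).1 hpl)
  simpa [pow_mul] using padicValNat.pow_sub_pow hp hlc hpl hpl' hm

theorem sum_padicValNat_pow_sub_one {l : ℕ} (hp : Odd p) (hl : 1 < l) (n : ℕ) :
    ∑ j ∈ Finset.range n, padicValNat p (l ^ (j + 1) - 1) =
      n / orderOf (l : ZMod p) * padicValNat p (l ^ orderOf (l : ZMod p) - 1) +
        padicValNat p (n / orderOf (l : ZMod p)).factorial := by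
  set c := orderOf (l : ZMod p)
  have hdvd (j : ℕ) : p ∣ l ^ j - 1 ↔ c ∣ j := dvd_pow_sub_one_iff_orderOf_dvd (by omega) j
  induction n with
  | zero => simp
  | succ n ih =>
    rw [Finset.sum_range_succ, ih, Nat.succ_div]
    split_ifs with h
    · have hc : c ≠ 0 := by rintro hc; simp [hc] at h
      have hm : n / c + 1 ≠ 0 := Nat.succ_ne_zero _
      have hcm : n + 1 = c * (n / c + 1) := by
        rw [← Nat.succ_div_of_dvd h, Nat.mul_div_cancel' h]
      rw [hcm, padicValNat_pow_mul_sub_one hp hl hc ((hdvd c).2 dvd_rfl) hm, Nat.factorial_succ,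
        padicValNat.mul hm (Nat.factorial_ne_zero _)]
      ring
    · simp [padicValNat.eq_zero_of_not_dvd (mt (hdvd _).1 h)]

end Valuation

section Primes

theorem frequently_prime_mod_eight_eq_three : ∃ᶠ l : ℕ in atTop, l.Prime ∧ l % 8 = 3 :=
  Nat.frequently_atTop_prime_and_modEq (q := 8) (a := 3) (by decide) (by decide)

theorem orderOf_natCast_zmod_of_zpowers_eq_top {m d l : ℕ} [NeZero m] (hd : d ∣ m)
    {u : (ZMod m)ˣ} (hu : Subgroup.zpowers u = ⊤) (hlu : (l : ZMod m) = u) :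
    orderOf (l : ZMod d) = d.totient := by
  have : NeZero d := ⟨ne_zero_of_dvd_ne_zero (NeZero.ne m) hd⟩
  have hval : ((ZMod.unitsMap hd u : (ZMod d)ˣ) : ZMod d) = l := by
    rw [ZMod.unitsMap_val, ← hlu, ZMod.cast_natCast hd]
  have htop : Subgroup.zpowers (ZMod.unitsMap hd u) = ⊤ := by
    rw [← MonoidHom.map_zpowers, hu,
      Subgroup.map_top_of_surjective _ (ZMod.unitsMap_surjective hd)]
  rw [← hval, orderOf_units, orderOf_eq_card_of_zpowers_eq_top htop, Nat.card_eq_fintype_card,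
    ZMod.card_units_eq_totient]

theorem frequently_prime_orderOf_zmod_eq {p : ℕ} [hprime : Fact p.Prime] (hp : Odd p) :
    ∃ᶠ l : ℕ in atTop, l.Prime ∧ orderOf (l : ZMod p) = p - 1 ∧
      padicValNat p (l ^ (p - 1) - 1) = 1 := by
  have hp2 : p ≠ 2 := hp.ne_two_of_dvd_nat dvd_rfl
  obtain ⟨u, hu⟩ := isCyclic_iff_exists_zpowers_eq_top.1
    (ZMod.isCyclic_units_of_prime_pow p hprime.out hp2 2)
  refine (Nat.frequently_atTop_iff_infinite.2
    (Nat.infinite_setOfPred_prime_and_eq_mod u.isUnit)).mono ?_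
  rintro l ⟨hl, hlu⟩
  have horder : orderOf (l : ZMod p) = p - 1 := by
    rw [orderOf_natCast_zmod_of_zpowers_eq_top (dvd_pow_self p two_ne_zero) hu hlu,
      Nat.totient_prime hprime.out]
  have horder_sq : orderOf (l : ZMod (p ^ 2)) = p * (p - 1) := by
    rw [orderOf_natCast_zmod_of_zpowers_eq_top dvd_rfl hu hlu,
      Nat.totient_prime_pow_succ hprime.out, pow_one]
  refine ⟨hl, horder, padicValNat_eq_of_pow_dvd ?_ ?_⟩
  · rw [pow_one, dvd_pow_sub_one_iff_orderOf_dvd hl.ne_zero, horder]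
  · have hpos : 0 < p - 1 := Nat.sub_pos_of_lt hprime.out.one_lt
    rw [dvd_pow_sub_one_iff_orderOf_dvd hl.ne_zero, horder_sq]
    exact Nat.not_dvd_of_pos_of_lt hpos (lt_mul_of_one_lt_left hpos hprime.out.one_lt)

end Primes

section Legendre

theorem padicValNat_factorial_eq_sum_range {p n b : ℕ} [Fact p.Prime] (hb : Nat.log p n ≤ b) :
    padicValNat p n.factorial = ∑ i ∈ Finset.range b, n / p ^ (i + 1) := by
  rw [padicValNat_factorial (Nat.lt_succ_of_le hb), Finset.sum_Ico_eq_sum_range]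
  simp [add_comm]

theorem div_add_sum_range_div_pow {p n b : ℕ} [Fact p.Prime] (hb : Nat.log p n ≤ b + 1) :
    n / p + ∑ i ∈ Finset.range b, n / p ^ (i + 2) = padicValNat p n.factorial := by
  rw [padicValNat_factorial_eq_sum_range hb, Finset.sum_range_succ', add_comm, zero_add, pow_one]

theorem sum_range_div_mul_pow {p c n b : ℕ} [Fact p.Prime] (hb : Nat.log p (n / c) ≤ b) :
    ∑ i ∈ Finset.range (b + 1), n / (c * p ^ i) =
      n / c + padicValNat p (n / c).factorial := by
  rw [padicValNat_factorial_eq_sum_range hb, Finset.sum_range_succ', add_comm]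
  simp only [pow_zero, mul_one, Nat.div_div_eq_div_mul]

end Legendre

section Bound

variable {n : ℕ} (G : Subgroup (GL (Fin n) ℚ)) [Finite G]

theorem padicValNat_two_card_le :
    padicValNat 2 (Nat.card G) ≤ n + n / 2 + padicValNat 2 n.factorial := by
  refine padicValNat_card_le_of_frequently G (frequently_prime_mod_eight_eq_three.mono ?_)
  rintro l ⟨hl, hl8⟩
  have := Fact.mk hl
  have hsub : padicValNat 2 (l - 1) = 1 := padicValNat_eq_of_pow_dvd (by omega) (by omega)
  have hadd : padicValNat 2 (l + 1) = 2 := padicValNat_eq_of_pow_dvd (by omega) (by omega)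
  have hsum := sum_padicValNat_two_pow_sub_one_add hl.one_lt (Nat.odd_iff.2 (by omega)) n
  rw [hsub, hadd] at hsum
  rw [padicValNat_card_GL _ (by rw [ZMod.card]; omega), ZMod.card]
  exact ⟨hl, by omega⟩

theorem padicValNat_card_le_of_odd {p : ℕ} [Fact p.Prime] (hp : Odd p) :
    padicValNat p (Nat.card G) ≤ n / (p - 1) + padicValNat p (n / (p - 1)).factorial := by
  refine padicValNat_card_le_of_frequently G ((frequently_prime_orderOf_zmod_eq hp).mono ?_)
  rintro l ⟨hl, horder, hval⟩
  have := Fact.mk hl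
  have hpl : ¬ p ∣ l := fun h ↦ by
    rw [(ZMod.natCast_eq_zero_iff l p).2 h, orderOf_zero] at horder
    have := (Fact.out : p.Prime).two_le
    omega
  rw [padicValNat_card_GL _ (by rwa [ZMod.card]), ZMod.card,
    sum_padicValNat_pow_sub_one hp hl.one_lt, horder, hval, mul_one]
  exact ⟨hl, le_rfl⟩

end Bound

/-- Minkowski's divisibility bound (Definition 3.1 with Remark 3.4): the order of any
finite subgroup of `GL(n, ℚ)` divides
`2^{n + 2⌊n/2⌋ + ∑_{i≥2}⌊n/2^i⌋} · ∏_{odd primes p ≤ n+1} p^{∑_{i≥0}⌊n/((p-1)p^i)⌋}`. -/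
theorem finite_subgroup_GL_rat_card_dvd
    (n : ℕ) (hn : 1 ≤ n) (H : Subgroup (GL (Fin n) ℚ)) [Finite H] :
    Nat.card H ∣
      2 ^ (n + 2 * (n / 2) + ∑ i ∈ Finset.range (n + 1), n / 2 ^ (i + 2)) *
        ∏ p ∈ (Finset.range (n + 2)).filter (fun p => p.Prime ∧ Odd p),
          p ^ (∑ i ∈ Finset.range (n + 1), n / ((p - 1) * p ^ i)) := by
  rw [Nat.dvd_iff_prime_pow_dvd_dvd]
  intro p k hp hk
  have := Fact.mk hp
  rw [padicValNat_dvd_iff_le Nat.card_pos.ne'] at hk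
  rcases hp.eq_two_or_odd' with rfl | hodd
  · have hbound := padicValNat_two_card_le H
    rw [← div_add_sum_range_div_pow ((Nat.log_le_self 2 n).trans (Nat.le_add_right n 2))] at hbound
    exact dvd_mul_of_dvd_left (pow_dvd_pow 2 (by omega)) _
  · have hbound := hk.trans (padicValNat_card_le_of_odd H hodd)
    by_cases hpn : p < n + 2
    · have hmem : p ∈ (Finset.range (n + 2)).filter fun p ↦ p.Prime ∧ Odd p :=
        Finset.mem_filter.2 ⟨Finset.mem_range.2 hpn, hp, hodd⟩
      rw [← sum_range_div_mul_pow ((Nat.log_le_self p _).trans (Nat.div_le_self n _))] at hbound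
      refine dvd_mul_of_dvd_right (dvd_trans ?_ (Finset.dvd_prod_of_mem _ hmem)) _
      exact pow_dvd_pow p hbound
    · have hdiv : n / (p - 1) = 0 := Nat.div_eq_of_lt (by omega)
      have hk : k = 0 := by simpa [hdiv] using hbound
      simp [hk]
end

section
/- Let g ≥ 1 be an integer and let H be a finite subgroup of the symplectic group Sp(2g, ℚ) of 2g × 2g rational matrices preserving the standard symplectic form. Then the order of H divides 2^{c(g)} · ∏_{odd primes p ≤ 2g+1} p^{d(g,p)}, where c(g) := 2g + ∑_{i≥1} ⌊g/2^i⌋ and d(g,p) := ∑_{i≥0} ⌊2g/((p-1)·p^i)⌋. -/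
/-!
For an arbitrary prime `p` we use Schur's argument. An element `a ≠ 1` of `p`-power order acting on
`ℚ ^ n` has trace `n - p * k` with `1 ≤ k ≤ n / (p - 1)`, because its characteristic polynomial is a
product of cyclotomic polynomials of `p`-power index. Since the sum of an integral polynomial in the
character over a group is a multiple of the order of the group, the order of a `p`-group `G` divides
`∏ k, p * k = p ^ ⌊n / (p - 1)⌋ * ⌊n / (p - 1)⌋!`.

For `p = 2` this is too weak, and the symplectic form `ω` enters through the involutions. The
`±1`-eigenspaces of an involution are `ω`-orthogonal, hence symplectic of dimensions `2m` and `2n`,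
and its centralizer embeds into `Sp(2m) × Sp(2n)`. Induction on `g` therefore applies as soon as
some involution `a ≠ ±1` has all its conjugates in `{±a}`; if `-a` is a conjugate of `a`, then
`m = n`, which pays for the index `2` of the centralizer. Otherwise a maximal abelian normal
subgroup `A` is cyclic, so `|G| ≤ |A| φ(|A|)` while `φ(|A|) ≤ 2g`. Only `g = 1`, `|A| = 4` needs
more: there the generator of `A` has square `-1`, and a symplectic element anticommuting with it
would make `-1` a sum of two rational squares, so `G = A`.
-/

open Matrix

section Polynomials

open Polynomial UniqueFactorizationMonoid

lemma nextCoeff_expand {R : Type*} [CommSemiring R] {q : ℕ} (hq : 2 ≤ q) (f : R[X]) :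
    (expand R q f).nextCoeff = 0 := by
  rcases Nat.eq_zero_or_pos f.natDegree with hf | hf
  · simp [nextCoeff, natDegree_expand, hf]
  · have hpos : 0 < f.natDegree * q := Nat.mul_pos hf (by lia)
    rw [nextCoeff_of_natDegree_pos (by rwa [natDegree_expand]), natDegree_expand,
      coeff_expand (by lia), if_neg]
    intro hdvd
    have : q ∣ 1 := (Nat.dvd_sub_iff_right hpos (dvd_mul_left q _)).mp hdvd
    exact absurd (Nat.le_of_dvd one_pos this) (by lia)

lemma nextCoeff_cyclotomic_prime {R : Type*} [CommRing R] [Nontrivial R] {p : ℕ}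
    (hp : p.Prime) : (cyclotomic p R).nextCoeff = 1 := by
  have := hp.two_le
  have : Fact p.Prime := ⟨hp⟩
  have hdeg : (cyclotomic p R).natDegree = p - 1 := by
    rw [natDegree_cyclotomic, Nat.totient_prime hp]
  rw [nextCoeff_of_natDegree_pos (by lia), hdeg, cyclotomic_prime, finsetSum_coeff]
  simp only [coeff_X_pow, Finset.sum_ite_eq, Finset.mem_range]
  exact if_pos (by lia)

/-- The shape of the characteristic polynomial `f` of a rational matrix `a` of order a power of
`p`, with `k` measuring how far its trace is from that of `1`: as `tr a = -f.nextCoeff`, the second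
field says that `tr a = natDegree f - p * k`. -/
structure HasTraceDefect {R : Type*} [CommRing R] (p : ℕ) (f : R[X]) (k : ℕ) : Prop where
  monic : f.Monic
  natDegree_add_nextCoeff : (f.natDegree : R) + f.nextCoeff = p * k
  mul_le_natDegree : k * (p - 1) ≤ f.natDegree
  eq_X_sub_one_pow : k = 0 → f = (X - 1) ^ f.natDegree

namespace HasTraceDefect

variable {R : Type*} [CommRing R] {p k l : ℕ} {f h : R[X]}

lemma one : HasTraceDefect p (1 : R[X]) 0 where
  monic := monic_one
  natDegree_add_nextCoeff := by simp [nextCoeff]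
  mul_le_natDegree := by simp
  eq_X_sub_one_pow := by simp

lemma mul (hf : HasTraceDefect p f k) (hh : HasTraceDefect p h l) :
    HasTraceDefect p (f * h) (k + l) where
  monic := hf.monic.mul hh.monic
  natDegree_add_nextCoeff := by
    rw [hf.monic.natDegree_mul hh.monic, hf.monic.nextCoeff_mul hh.monic]
    push_cast
    linear_combination hf.natDegree_add_nextCoeff + hh.natDegree_add_nextCoeff
  mul_le_natDegree := by
    rw [hf.monic.natDegree_mul hh.monic, add_mul]
    exact add_le_add hf.mul_le_natDegree hh.mul_le_natDegree
  eq_X_sub_one_pow hkl := by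
    rw [hf.monic.natDegree_mul hh.monic, pow_add, ← hf.eq_X_sub_one_pow (by lia),
      ← hh.eq_X_sub_one_pow (by lia)]

variable [Nontrivial R]

lemma X_sub_one : HasTraceDefect p (X - 1 : R[X]) 0 := by
  have hdeg : (X - 1 : R[X]).natDegree = 1 := natDegree_X_sub_C 1
  have hnext : (X - 1 : R[X]).nextCoeff = -1 := nextCoeff_X_sub_C 1
  exact ⟨monic_X_sub_C 1, by simp [hdeg, hnext], by simp, by simp [hdeg]⟩

lemma cyclotomic_prime (hp : p.Prime) : HasTraceDefect p (cyclotomic p R) 1 where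
  monic := cyclotomic.monic p R
  natDegree_add_nextCoeff := by
    rw [nextCoeff_cyclotomic_prime hp, natDegree_cyclotomic, Nat.totient_prime hp]
    push_cast [Nat.cast_sub hp.one_le]
    ring
  mul_le_natDegree := by rw [natDegree_cyclotomic, Nat.totient_prime hp, one_mul]
  eq_X_sub_one_pow := by simp

lemma cyclotomic_prime_pow_add_two (hp : p.Prime) (i : ℕ) :
    HasTraceDefect p (cyclotomic (p ^ (i + 2)) R) (p ^ i * (p - 1)) := by
  have hdeg : (cyclotomic (p ^ (i + 2)) R).natDegree = p * (p ^ i * (p - 1)) := by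
    rw [natDegree_cyclotomic, Nat.totient_prime_pow_succ hp, pow_succ']
    ring
  have hexp : cyclotomic (p ^ (i + 2)) R = expand R p (cyclotomic (p ^ (i + 1)) R) := by
    rw [cyclotomic_expand_eq_cyclotomic hp (dvd_pow_self p i.succ_ne_zero), ← pow_succ]
  have hpos : 0 < p ^ i * (p - 1) :=
    Nat.mul_pos (pow_pos hp.pos i) (Nat.sub_pos_of_lt hp.one_lt)
  refine ⟨cyclotomic.monic _ R, ?_, ?_, fun h0 => absurd h0 hpos.ne'⟩
  · rw [hdeg, hexp, nextCoeff_expand hp.two_le, add_zero, Nat.cast_mul]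
  · rw [hdeg, mul_comm]
    exact Nat.mul_le_mul_right _ (Nat.sub_le p 1)

lemma exists_cyclotomic_prime_pow (R : Type*) [CommRing R] [Nontrivial R] (hp : p.Prime) :
    ∀ i : ℕ, ∃ k, HasTraceDefect p (cyclotomic (p ^ i) R) k
  | 0 => ⟨0, by simpa using X_sub_one⟩
  | 1 => ⟨1, by simpa using cyclotomic_prime hp⟩
  | i + 2 => ⟨_, cyclotomic_prime_pow_add_two hp i⟩

end HasTraceDefect

lemma exists_eq_cyclotomic_of_mem_normalizedFactors {n N : ℕ} (hn : 0 < n) {f q : ℚ[X]}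
    (hf : f ∣ (X ^ n - 1) ^ N) (hq : q ∈ normalizedFactors f) :
    ∃ d ∈ n.divisors, q = cyclotomic d ℚ := by
  have hprime : Prime q := prime_of_normalized_factor q hq
  have hdvd : q ∣ X ^ n - 1 :=
    hprime.dvd_of_dvd_pow ((dvd_of_mem_normalizedFactors hq).trans hf)
  rw [← prod_cyclotomic_eq_X_pow_sub_one hn, hprime.dvd_finsetProd_iff] at hdvd
  obtain ⟨d, hd, hqd⟩ := hdvd
  have hirr : Irreducible (cyclotomic d ℚ) :=
    cyclotomic.irreducible_rat (Nat.pos_of_mem_divisors hd)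
  have hmonic : q.Monic := by
    rw [← normalize_normalized_factor q hq]
    exact monic_normalize hprime.ne_zero
  exact ⟨d, hd, eq_of_monic_of_associated hmonic (cyclotomic.monic d ℚ)
    (hprime.irreducible.associated_of_dvd hirr hqd)⟩

lemma exists_hasTraceDefect_of_dvd_pow {p : ℕ} (hp : p.Prime) {m N : ℕ} {f : ℚ[X]}
    (hmonic : f.Monic) (hf : f ∣ (X ^ p ^ m - 1) ^ N) : ∃ k, HasTraceDefect p f k := by
  have hprod : (normalizedFactors f).prod = f := by
    rw [prod_normalizedFactors_eq hmonic.ne_zero, hmonic.normalize_eq_self]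
  rw [← hprod]
  refine Multiset.prod_induction (fun f => ∃ k, HasTraceDefect p f k) _ ?_ ⟨0, .one⟩ ?_
  · rintro f h ⟨k, hf⟩ ⟨l, hh⟩
    exact ⟨k + l, hf.mul hh⟩
  · intro q hq
    obtain ⟨d, hd, rfl⟩ :=
      exists_eq_cyclotomic_of_mem_normalizedFactors (pow_pos hp.pos m) hf hq
    obtain ⟨i, -, rfl⟩ := (Nat.dvd_prime_pow hp).mp (Nat.dvd_of_mem_divisors hd)
    exact HasTraceDefect.exists_cyclotomic_prime_pow ℚ hp i

end Polynomials

section Trace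

open Polynomial Module

lemma matrix_charpoly_dvd_of_pow_eq_one {R ι : Type*} [CommRing R] [Fintype ι] [DecidableEq ι]
    {A : Matrix ι ι R} {n : ℕ} (hA : A ^ n = 1) :
    A.charpoly ∣ (X ^ n - 1) ^ Fintype.card ι := by
  have hcomm : Commute (scalar ι (X : R[X])) ((C : R →+* R[X]).mapMatrix A) :=
    scalar_commute _ (fun _ => Commute.all _ _) _
  obtain ⟨D, hD⟩ := hcomm.sub_dvd_pow_sub_pow n
  have hpow : scalar ι (X : R[X]) ^ n - (C : R →+* R[X]).mapMatrix A ^ n =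
      scalar ι (X ^ n - 1 : R[X]) := by
    rw [← map_pow, ← map_pow, hA, map_one, map_sub, map_one]
  refine ⟨D.det, ?_⟩
  calc (X ^ n - 1 : R[X]) ^ Fintype.card ι = (scalar ι (X ^ n - 1 : R[X])).det := by simp
    _ = A.charpoly * D.det := by rw [← hpow, hD, det_mul, charpoly, charmatrix]

section

variable {K V : Type*} [Field K] [AddCommGroup V] [Module K V] [FiniteDimensional K V]

lemma charpoly_dvd_of_pow_eq_one {a : End K V} {n : ℕ} (ha : a ^ n = 1) :
    a.charpoly ∣ (X ^ n - 1) ^ finrank K V := by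
  have h := matrix_charpoly_dvd_of_pow_eq_one
    (A := LinearMap.toMatrix (finBasis K V) (finBasis K V) a) (n := n)
    (by rw [LinearMap.toMatrix_pow, ha, LinearMap.toMatrix_one])
  rwa [LinearMap.charpoly_toMatrix, Fintype.card_fin] at h

lemma trace_eq_neg_nextCoeff_charpoly (a : End K V) :
    LinearMap.trace K V a = -a.charpoly.nextCoeff := by
  rw [LinearMap.trace_eq_matrix_trace K (finBasis K V), trace_eq_neg_charpoly_nextCoeff,
    LinearMap.charpoly_toMatrix]

lemma eq_one_of_pow_eq_one_of_charpoly_eq {a : End K V} {n N : ℕ} (hn : (n : K) ≠ 0)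
    (ha : a ^ n = 1) (hchar : a.charpoly = (X - 1) ^ N) : a = 1 := by
  have hsep : (X ^ n - 1 : K[X]).Separable := X_pow_sub_one_separable_iff.mpr hn
  have hmin : minpoly K a ∣ X ^ n - 1 := minpoly.dvd _ _ (by simp [ha])
  have hdvd : minpoly K a ∣ X - 1 :=
    (hsep.squarefree.squarefree_of_dvd hmin).isRadical _ _ (hchar ▸ a.minpoly_dvd_charpoly)
  simpa [sub_eq_zero] using minpoly.dvd_iff.mp hdvd

end

lemma exists_trace_eq_finrank_sub {V : Type*} [AddCommGroup V] [Module ℚ V]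
    [FiniteDimensional ℚ V] {p m : ℕ} (hp : p.Prime) {a : End ℚ V} (ha : a ^ p ^ m = 1)
    (ha1 : a ≠ 1) :
    ∃ k < finrank ℚ V / (p - 1), LinearMap.trace ℚ V a = finrank ℚ V - p * (k + 1 : ℕ) := by
  obtain ⟨k, hk⟩ := exists_hasTraceDefect_of_dvd_pow hp a.charpoly_monic
    (charpoly_dvd_of_pow_eq_one ha)
  have hk0 : k ≠ 0 := fun h0 => ha1 <|
    eq_one_of_pow_eq_one_of_charpoly_eq (by exact_mod_cast (pow_pos hp.pos m).ne') ha
      (hk.eq_X_sub_one_pow h0)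
  obtain ⟨j, rfl⟩ := Nat.exists_eq_succ_of_ne_zero hk0
  have hle := hk.mul_le_natDegree
  have htrace := hk.natDegree_add_nextCoeff
  rw [LinearMap.charpoly_natDegree] at hle htrace
  refine ⟨j, (Nat.le_div_iff_mul_le (Nat.sub_pos_of_lt hp.one_lt)).mpr hle, ?_⟩
  rw [trace_eq_neg_nextCoeff_charpoly]
  linear_combination -htrace

end Trace

section CharacterSums

open Polynomial Module Representation

universe u v

variable {K : Type u} {V : Type v} {G : Type*} [Field K] [Group G] [AddCommGroup V] [Module K V]
  [FiniteDimensional K V]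

lemma exists_character_eq_pow (ρ : Representation K G V) (j : ℕ) :
    ∃ (W : Type max u v) (_ : AddCommGroup W) (_ : Module K W) (_ : FiniteDimensional K W)
      (σ : Representation K G W), ∀ x, σ.character x = ρ.character x ^ j := by
  induction j with
  | zero => exact ⟨ULift.{v} K, inferInstance, inferInstance, inferInstance,
      Representation.trivial K G (ULift K), fun x => by simp [character, finrank_ulift]⟩
  | succ j ih =>
    obtain ⟨W, _, _, _, σ, hσ⟩ := ih
    exact ⟨TensorProduct K W V, inferInstance, inferInstance, inferInstance, tprod σ ρ,
      fun x => by rw [char_tensor, Pi.mul_apply, hσ, pow_succ]⟩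

variable [Fintype G] [CharZero K]

lemma exists_sum_character_pow_eq_card_mul (ρ : Representation K G V) (j : ℕ) :
    ∃ d : ℤ, ∑ x, ρ.character x ^ j = Nat.card G * d := by
  obtain ⟨W, _, _, _, σ, hσ⟩ := exists_character_eq_pow ρ j
  have hcard : (Nat.card G : K) ≠ 0 := Nat.cast_ne_zero.mpr Nat.card_pos.ne'
  let : Invertible (Nat.card G : K) := invertibleOfNonzero hcard
  refine ⟨finrank K (invariants σ), ?_⟩
  simp_rw [← hσ]
  rw [Int.cast_natCast, ← card_inv_mul_sum_char_eq_finrank, mul_inv_cancel_left₀ hcard]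

lemma exists_sum_aeval_character_eq_card_mul (ρ : Representation K G V) (F : ℤ[X]) :
    ∃ d : ℤ, ∑ x, aeval (ρ.character x) F = Nat.card G * d := by
  choose d hd using exists_sum_character_pow_eq_card_mul ρ
  refine ⟨∑ j ∈ F.support, F.coeff j * d j, ?_⟩
  simp_rw [aeval_def, eval₂_eq_sum, Polynomial.sum]
  rw [Finset.sum_comm]
  simp_rw [← Finset.mul_sum, hd]
  push_cast
  rw [Finset.mul_sum]
  exact Finset.sum_congr rfl fun j _ => by simp only [eq_intCast]; ring

end CharacterSums

section SchurBound

open Polynomial Module Representation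

variable {V G : Type*} [Group G] [Finite G] [AddCommGroup V] [Module ℚ V]
  [FiniteDimensional ℚ V]

-- `F(χ)` vanishes away from `1` for `F = ∏ (X - (n - p k))`, so `|G|` divides `F(n) = p ^ M * M!`.
lemma card_dvd_of_isPGroup {p : ℕ} (hp : p.Prime) (hG : IsPGroup p G)
    {ρ : Representation ℚ G V} (hρ : Function.Injective ρ) :
    Nat.card G ∣ p ^ (finrank ℚ V / (p - 1)) * (finrank ℚ V / (p - 1)).factorial := by
  have := Fintype.ofFinite G
  set M := finrank ℚ V / (p - 1)
  let F : ℤ[X] := ∏ k ∈ Finset.range M, (X - C ((finrank ℚ V : ℤ) - p * (k + 1 : ℕ)))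
  have hF (x : ℚ) :
      aeval x F = ∏ k ∈ Finset.range M, (x - ((finrank ℚ V : ℚ) - p * (k + 1 : ℕ))) := by
    simp [F, map_prod]
  have hF_one : aeval (ρ.character 1) F = ((p ^ M * M.factorial : ℕ) : ℚ) := by
    rw [hF, char_one, ← Finset.prod_range_add_one_eq_factorial, Nat.cast_mul, Nat.cast_prod]
    simp [Finset.prod_mul_distrib]
  have hF_ne_one (x : G) (hx : x ≠ 1) : aeval (ρ.character x) F = 0 := by
    obtain ⟨m, hm⟩ := hG x
    obtain ⟨k, hk, htrace⟩ := exists_trace_eq_finrank_sub hp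
      (show ρ x ^ p ^ m = 1 by rw [← map_pow, hm, map_one])
      (fun h => hx (hρ (h.trans (map_one ρ).symm)))
    rw [hF]
    exact Finset.prod_eq_zero (Finset.mem_range.mpr hk) (sub_eq_zero.mpr htrace)
  obtain ⟨d, hd⟩ := exists_sum_aeval_character_eq_card_mul ρ F
  rw [Fintype.sum_eq_single 1 hF_ne_one, hF_one] at hd
  exact Int.natCast_dvd_natCast.mp ⟨d, by exact_mod_cast hd⟩

end SchurBound

section Cyclic

lemma card_comap_le {G H : Type*} [Group G] [Group H] [Finite G] [Finite H] (f : G →* H)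
    (K : Subgroup H) : Nat.card (K.comap f) ≤ Nat.card f.ker * Nat.card K := by
  have hrange : f.ker.relIndex (K.comap f) = Nat.card ((K.comap f).map f) := by
    rw [Subgroup.relIndex_ker]
  rw [← Subgroup.relIndex_bot_left, ← Subgroup.relIndex_mul_relIndex _ _ _ bot_le
    (Subgroup.ker_le_comap f K), Subgroup.relIndex_bot_left, hrange]
  exact Nat.mul_le_mul_left _ (Subgroup.card_le_of_le (Subgroup.map_comap_le f K))

variable {A : Type*} [CommGroup A] [Finite A] {p : ℕ}

lemma card_ker_powMonoidHom_pow_le (h : Nat.card (powMonoidHom p : A →* A).ker ≤ p) (j : ℕ) :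
    Nat.card (powMonoidHom (p ^ j) : A →* A).ker ≤ p ^ j := by
  induction j with
  | zero =>
    rw [(MonoidHom.ker_eq_bot_iff _).mpr fun x y hxy => by simpa using hxy]
    simp
  | succ j ih =>
    have hker : (powMonoidHom (p ^ (j + 1)) : A →* A).ker =
        (powMonoidHom (p ^ j)).ker.comap (powMonoidHom p) := by
      ext x
      simp [MonoidHom.mem_ker, ← pow_mul, ← pow_succ']
    rw [hker, pow_succ']
    exact (card_comap_le _ _).trans (Nat.mul_le_mul h ih)

lemma isCyclic_of_card_ker_powMonoidHom_le [Fact p.Prime] (hA : IsPGroup p A)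
    (h : Nat.card (powMonoidHom p : A →* A).ker ≤ p) : IsCyclic A := by
  classical
  have := Fintype.ofFinite A
  refine isCyclic_of_card_pow_eq_one_le fun n hn => ?_
  obtain ⟨j, m, hm, rfl⟩ := Nat.exists_eq_pow_mul_and_not_dvd hn.ne' p (Fact.out : p.Prime).ne_one
  have hsub (x : A) (hx : x ^ (p ^ j * m) = 1) : x ^ p ^ j = 1 := by
    obtain ⟨k, hk⟩ := IsPGroup.iff_orderOf.mp hA x
    have hcop : (orderOf x).Coprime m := by
      rw [hk]
      exact Nat.Coprime.pow_left k ((Nat.Prime.coprime_iff_not_dvd Fact.out).mpr hm)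
    exact orderOf_dvd_iff_pow_eq_one.mp (hcop.dvd_of_dvd_mul_right (orderOf_dvd_of_pow_eq_one hx))
  calc (Finset.univ.filter fun x : A => x ^ (p ^ j * m) = 1).card
      ≤ (Finset.univ.filter fun x : A => x ^ p ^ j = 1).card :=
        Finset.card_le_card (Finset.monotone_filter_right _ fun x _ => hsub x)
    _ = Nat.card (powMonoidHom (p ^ j) : A →* A).ker := by
        rw [← Fintype.card_subtype, ← Nat.card_eq_fintype_card]; rfl
    _ ≤ p ^ j := card_ker_powMonoidHom_pow_le h j
    _ ≤ p ^ j * m := Nat.le_mul_of_pos_right _ (Nat.pos_of_ne_zero fun h0 => by simp [h0] at hm)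

end Cyclic

section PGroups

open Subgroup
open scoped commutatorElement

variable {G : Type*} [Group G]

lemma sup_le_centralizer_sup {H K : Subgroup G} (hH : H ≤ centralizer H) (hK : K ≤ centralizer K)
    (hHK : K ≤ centralizer H) : H ⊔ K ≤ centralizer ((H ⊔ K : Subgroup G) : Set G) :=
  sup_le (le_centralizer_iff.mp (sup_le hH hHK))
    (le_centralizer_iff.mp (sup_le (le_centralizer_iff.mp hHK) hK))

lemma sup_zpowers_normal {A : Subgroup G} [A.Normal] {a : G} (ha : ∀ x : G, ⁅x, a⁆ ∈ A) :
    (A ⊔ zpowers a).Normal := by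
  have hcenter : (zpowers a).map (QuotientGroup.mk' A) ≤ center (G ⧸ A) := by
    rw [MonoidHom.map_zpowers, zpowers_le, mem_center_iff]
    refine (QuotientGroup.mk'_surjective A).forall.mpr fun x => ?_
    rw [← commutatorElement_eq_one_iff_mul_comm]
    exact (QuotientGroup.eq_one_iff ⁅x, a⁆).mpr (ha x)
  have : ((zpowers a).map (QuotientGroup.mk' A)).Normal :=
    ⟨fun y hy x => by rwa [mem_center_iff.mp (hcenter hy) x, mul_inv_cancel_right]⟩
  rw [sup_comm, ← QuotientGroup.ker_mk' A, ← comap_map_eq]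
  infer_instance

lemma ker_conjNormal_eq_centralizer (A : Subgroup G) [A.Normal] :
    (MulAut.conjNormal : G →* MulAut A).ker = centralizer (A : Set G) := by
  ext x
  simp [MonoidHom.mem_ker, MulEquiv.ext_iff, Subtype.ext_iff, mem_centralizer_iff,
    mul_inv_eq_iff_eq_mul, eq_comm (a := x * _)]

lemma index_centralizer_singleton_le {a : G} {Z : Subgroup G} [Finite Z]
    (ha : ∀ x : G, ⁅x, a⁆ ∈ Z) : (centralizer {a}).index ≤ Nat.card Z := by
  refine Nat.card_le_card_of_injective (fun x : G ⧸ centralizer {a} => (⟨⁅x.out, a⁆, ha _⟩ : Z))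
    fun x y hxy => ?_
  have hconj : x.out * a * x.out⁻¹ = y.out * a * y.out⁻¹ :=
    mul_right_cancel (congrArg Subtype.val hxy)
  rw [← x.out_eq', ← y.out_eq', QuotientGroup.eq, mem_centralizer_singleton_iff]
  calc x.out⁻¹ * y.out * a = x.out⁻¹ * (y.out * a * y.out⁻¹) * y.out := by group
    _ = x.out⁻¹ * (x.out * a * x.out⁻¹) * y.out := by rw [hconj]
    _ = a * (x.out⁻¹ * y.out) := by group

lemma card_eq_orderOf_of_mem_center {a : G} (ha : a ∈ center G)
    (hcentralizer : centralizer (zpowers a : Set G) = zpowers a) : Nat.card G = orderOf a := by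
  have htop : zpowers a = ⊤ := by
    rwa [← hcentralizer, centralizer_eq_top_iff_subset, SetLike.coe_subset_coe, zpowers_le]
  rw [← Nat.card_zpowers, htop, card_top]

variable [Finite G]

lemma card_le_card_mul_totient (A : Subgroup G) [A.Normal] [IsCyclic A]
    (hA : centralizer (A : Set G) = A) : Nat.card G ≤ Nat.card A * (Nat.card A).totient := by
  let f : G →* MulAut A := MulAut.conjNormal
  have := Finite.of_equiv _ (IsCyclic.mulAutMulEquiv A).symm.toEquiv
  calc Nat.card G = Nat.card f.ker * Nat.card f.range := by
        rw [← index_ker, card_mul_index]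
    _ ≤ Nat.card A * (Nat.card A).totient := by
        rw [ker_conjNormal_eq_centralizer, hA, ← IsCyclic.card_mulAut]
        exact Nat.mul_le_mul_left _ (card_le_card_group _)

variable {p : ℕ} [Fact p.Prime]

lemma exists_mem_center_of_normal (hG : IsPGroup p G) (N : Subgroup G) [N.Normal] (hN : N ≠ ⊥) :
    ∃ a ∈ N, a ∈ center G ∧ a ≠ 1 := by
  let : MulAction G N := MulAction.compHom N (MulAut.conjNormal : G →* MulAut N)
  have hsmul (x : G) (n : N) : ((x • n : N) : G) = x * n * x⁻¹ := MulAut.conjNormal_apply x n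
  have hdvd : p ∣ Nat.card N :=
    (hG.to_subgroup N).card_eq_or_dvd.resolve_left (mt card_eq_one.mp hN)
  obtain ⟨a, ha, ha1⟩ := hG.exists_fixed_point_of_prime_dvd_card_of_fixed_point N hdvd
    (a := 1) (fun x => Subtype.ext (by simp [hsmul]))
  refine ⟨a, a.2, mem_center_iff.mpr fun x => ?_, fun h => ha1 (Subtype.ext h.symm)⟩
  rw [← mul_inv_eq_iff_eq_mul, ← hsmul, ha x]

lemma exists_notMem_forall_commutator_mem (hG : IsPGroup p G) (Z N : Subgroup G) [Z.Normal]
    [hN : N.Normal] (hNZ : ¬ N ≤ Z) : ∃ a ∈ N, a ∉ Z ∧ ∀ x : G, ⁅x, a⁆ ∈ Z := by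
  have := hN.map (QuotientGroup.mk' Z) (QuotientGroup.mk'_surjective Z)
  obtain ⟨-, ⟨a, ha, rfl⟩, hcenter, hne⟩ := exists_mem_center_of_normal (hG.to_quotient Z)
    (N.map (QuotientGroup.mk' Z)) (by rwa [Ne, Subgroup.map_eq_bot_iff, QuotientGroup.ker_mk'])
  refine ⟨a, ha, fun h => hne ((QuotientGroup.eq_one_iff a).mpr h), fun x => ?_⟩
  rw [← QuotientGroup.ker_mk' Z, MonoidHom.mem_ker, map_commutatorElement,
    commutatorElement_eq_one_iff_mul_comm]
  exact mem_center_iff.mp hcenter _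

lemma exists_normal_centralizer_eq (hG : IsPGroup p G) :
    ∃ A : Subgroup G, A.Normal ∧ centralizer (A : Set G) = A := by
  obtain ⟨A, hA⟩ := (Set.toFinite {A : Subgroup G | A.Normal ∧ A ≤ centralizer A}).exists_maximal
    ⟨⊥, inferInstance, bot_le⟩
  obtain ⟨hnormal, hcomm⟩ := hA.prop
  refine ⟨A, hnormal, le_antisymm ?_ hcomm⟩
  by_contra hle
  obtain ⟨a, ha, haA, hcommutator⟩ :=
    exists_notMem_forall_commutator_mem hG A (centralizer (A : Set G)) hle
  have hsup := hA.le_of_ge (y := A ⊔ zpowers a) ⟨sup_zpowers_normal hcommutator,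
    sup_le_centralizer_sup hcomm (le_centralizer _) ((zpowers_le).mpr ha)⟩ le_sup_left
  exact haA (hsup (mem_sup_right (mem_zpowers a)))

open scoped IsMulCommutative

lemma exists_pow_eq_one_or_exists_isCyclic (hG : IsPGroup p G) (Z : Subgroup G) [Z.Normal]
    (hZ : Nat.card Z ≤ p) :
    (∃ a, a ^ p = 1 ∧ a ∉ Z ∧ ∀ x : G, ⁅x, a⁆ ∈ Z) ∨
      ∃ A : Subgroup G, A.Normal ∧ IsCyclic A ∧ centralizer (A : Set G) = A ∧
        ∀ a ∈ A, a ^ p = 1 → a ∈ Z := by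
  obtain ⟨A, hnormal, hA⟩ := exists_normal_centralizer_eq hG
  have : IsMulCommutative A := le_centralizer_iff_isMulCommutative.mp hA.ge
  let Ω : Subgroup A := (powMonoidHom p : A →* A).ker
  have hmem (a : A) : a ∈ Ω ↔ a ^ p = 1 := Iff.rfl
  have : Ω.Characteristic := characteristic_iff_le_comap.mpr fun φ a ha => by
    rw [mem_comap, hmem, MulEquiv.coe_toMonoidHom, ← map_pow, (hmem a).mp ha, map_one]
  by_cases hΩ : Ω.map A.subtype ≤ Z
  · refine .inr ⟨A, hnormal, ?_, hA, fun a ha hap => hΩ ⟨⟨a, ha⟩, Subtype.ext hap, rfl⟩⟩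
    refine isCyclic_of_card_ker_powMonoidHom_le (hG.to_subgroup A) ?_
    calc Nat.card Ω = Nat.card (Ω.map A.subtype) :=
          (card_map_of_injective A.subtype_injective).symm
      _ ≤ p := (card_le_of_le hΩ).trans hZ
  · obtain ⟨-, ⟨a, ha, rfl⟩, haZ, hcommutator⟩ :=
      exists_notMem_forall_commutator_mem hG Z (Ω.map A.subtype) hΩ
    exact .inl ⟨a, congrArg Subtype.val ha, haZ, hcommutator⟩

end PGroups

section AlternatingForms

open Module

variable {K V : Type*} [Field K] [AddCommGroup V] [Module K V] {ω : LinearMap.BilinForm K V}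

lemma even_finrank_of_isAlt [FiniteDimensional K V] (h2 : (2 : K) ≠ 0) (halt : ω.IsAlt)
    (hω : ω.Nondegenerate) : Even (finrank K V) := by
  let b := finBasis K V
  let M := LinearMap.BilinForm.toMatrix b ω
  have hskew : Mᵀ = -M := by
    ext i j
    simpa [M, LinearMap.BilinForm.toMatrix_apply] using (halt.neg_eq (b i) (b j)).symm
  have hdet : M.det ≠ 0 := (LinearMap.BilinForm.nondegenerate_iff_det_ne_zero b).mp hω
  by_contra hodd
  have hneg : M.det = -M.det := by
    conv_lhs => rw [← det_transpose, hskew, det_neg, Fintype.card_fin,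
      (Nat.not_even_iff_odd.mp hodd).neg_one_pow, neg_one_mul]
  exact hdet ((mul_eq_zero.mp (by linear_combination hneg : 2 * M.det = 0)).resolve_left h2)

lemma nondegenerate_restrict_of_isCompl (hrefl : ω.IsRefl) (hω : ω.Nondegenerate)
    {U W : Submodule K V} (hUW : IsCompl U W) (horth : ∀ u ∈ U, ∀ w ∈ W, ω u w = 0) :
    (ω.restrict U).Nondegenerate := by
  refine ω.nondegenerate_restrict_of_disjoint_orthogonal hrefl
    (Submodule.disjoint_def.mpr fun x hxU hx => hω.1 x fun y => ?_)
  obtain ⟨u, hu, w, hw, rfl⟩ := Submodule.mem_sup.mp (hUW.sup_eq_top ▸ Submodule.mem_top (x := y))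
  rw [map_add, horth x hxU w hw, hrefl _ _ (hx u hu), add_zero]

end AlternatingForms

section Involutions

open Module

variable {K V : Type*} [Field K] [AddCommGroup V] [Module K V] {T : End K V}

lemma isCompl_eigenspace_one_neg_one (h2 : (2 : K) ≠ 0) (hT : T * T = 1) :
    IsCompl (T.eigenspace 1) (T.eigenspace (-1)) := by
  have hTT (v : V) : T (T v) = v := LinearMap.congr_fun hT v
  refine ⟨Submodule.disjoint_def.mpr fun v hv hv' => ?_, codisjoint_iff.mpr ?_⟩
  · rw [End.mem_eigenspace_iff] at hv hv'
    have hv2 : (2 : K) • v = 0 := by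
      rw [two_smul]
      nth_rewrite 1 [← one_smul K v]
      rw [← hv, hv', neg_one_smul, neg_add_cancel]
    exact (smul_eq_zero.mp hv2).resolve_left h2
  · refine Submodule.eq_top_iff'.mpr fun v => Submodule.mem_sup.mpr
      ⟨(2⁻¹ : K) • (v + T v), ?_, (2⁻¹ : K) • (v - T v), ?_, ?_⟩
    · rw [End.mem_eigenspace_iff, map_smul, map_add, hTT, add_comm, one_smul]
    · rw [End.mem_eigenspace_iff, map_smul, map_sub, hTT, neg_one_smul, ← smul_neg, neg_sub]
    · rw [← smul_add, add_add_sub_cancel, ← two_smul K, inv_smul_smul₀ h2]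

lemma eigenspace_eq_top_iff {μ : K} : T.eigenspace μ = ⊤ ↔ T = μ • 1 := by
  rw [End.eigenspace_def, LinearMap.ker_eq_top, sub_eq_zero]

lemma finrank_eigenspace_le_of_anticommute [FiniteDimensional K V] {S : End K V}
    (hS : Function.Injective S) (hST : S * T = -(T * S)) (μ : K) :
    finrank K (T.eigenspace μ) ≤ finrank K (T.eigenspace (-μ)) := by
  refine LinearMap.finrank_le_finrank_of_injective
    (f := S.restrict (p := T.eigenspace μ) (q := T.eigenspace (-μ)) fun v hv => ?_)
    fun v w hvw => Subtype.ext (hS (congrArg Subtype.val hvw))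
  rw [End.mem_eigenspace_iff] at hv ⊢
  have h : S (T v) = -T (S v) := LinearMap.congr_fun hST v
  rw [← neg_eq_iff_eq_neg.mpr h, hv, map_smul, neg_smul]

end Involutions

section FiniteOrderEndomorphisms

open Module Polynomial

variable {V : Type*} [AddCommGroup V] [Module ℚ V] [FiniteDimensional ℚ V] [Nontrivial V]
  {T : End ℚ V}

lemma totient_le_finrank_of_aeval_cyclotomic_eq_zero {n : ℕ} (hn : 0 < n)
    (hT : aeval T (cyclotomic n ℚ) = 0) : n.totient ≤ finrank ℚ V := by
  have hminpoly := minpoly.eq_of_irreducible_of_monic (cyclotomic.irreducible_rat hn) hT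
    (cyclotomic.monic n ℚ)
  rw [← natDegree_cyclotomic n ℚ, hminpoly, ← T.charpoly_natDegree]
  exact natDegree_le_of_dvd (LinearMap.minpoly_dvd_charpoly T) T.charpoly_monic.ne_zero

lemma two_pow_le_finrank_of_pow_eq_neg_one {k : ℕ} (hT : T ^ 2 ^ k = -1) :
    2 ^ k ≤ finrank ℚ V := by
  have htotient : (2 ^ (k + 1)).totient = 2 ^ k := by
    rw [Nat.totient_prime_pow_succ Nat.prime_two, Nat.add_one_sub_one, mul_one]
  rw [← htotient]
  refine totient_le_finrank_of_aeval_cyclotomic_eq_zero (T := T) (by positivity) ?_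
  simp [cyclotomic_prime_pow_eq_geom_sum Nat.prime_two, Finset.sum_range_succ, hT]

end FiniteOrderEndomorphisms

section DimensionTwo

open Module

variable {K V : Type*} [Field K] [LinearOrder K] [IsStrictOrderedRing K] [AddCommGroup V]
  [Module K V]

lemma linearIndependent_pair_of_mul_self_eq_neg_one {T : End K V} (hT : T * T = -1) {v : V}
    (hv : v ≠ 0) : LinearIndependent K ![v, T v] := by
  rw [LinearIndependent.pair_iff' hv]
  intro c hc
  have hTT : T (T v) = -v := LinearMap.congr_fun hT v
  rw [← hc, map_smul, ← hc, smul_smul, ← neg_one_smul K v] at hTT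
  nlinarith [smul_left_injective K hv hTT, mul_self_nonneg c]

lemma not_anticommute_of_finrank_eq_two {ω : LinearMap.BilinForm K V} (hdim : finrank K V = 2)
    (halt : ω.IsAlt) (hω : ω.Nondegenerate) {S T : End K V} (hS : ∀ v w, ω (S v) (S w) = ω v w)
    (hT : T * T = -1) : S * T ≠ -(T * S) := by
  intro hST
  have : Nontrivial V := nontrivial_of_finrank_pos (by lia : 0 < finrank K V)
  obtain ⟨v, hv⟩ := exists_ne (0 : V)
  have hspan := (linearIndependent_pair_of_mul_self_eq_neg_one hT hv).span_eq_top_of_card_eq_finrank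
    (by simp [hdim])
  rw [Matrix.range_cons_cons_empty] at hspan
  have hcomb (w : V) : ∃ α β : K, α • v + β • T v = w :=
    Submodule.mem_span_pair.mp (hspan ▸ Submodule.mem_top)
  have hne : ω v (T v) ≠ 0 := fun h0 => hv <| hω.1 v fun w => by
    obtain ⟨α, β, rfl⟩ := hcomb w
    simp [halt v, h0]
  have hswap : ω (T v) v = -ω v (T v) := (LinearMap.BilinForm.IsAlt.neg_eq halt v (T v)).symm
  have hTT : T (T v) = -v := LinearMap.congr_fun hT v
  have hSTv : S (T v) = -T (S v) := LinearMap.congr_fun hST v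
  obtain ⟨α, β, hSv⟩ := hcomb (S v)
  -- `ω (S v) (T (S v))` is `-ω v (T v)` by invariance, but also `(α ^ 2 + β ^ 2) * ω v (T v)`.
  have hq : (α ^ 2 + β ^ 2 + 1) * ω v (T v) = 0 := by
    have h := hS v (T v)
    rw [hSTv, ← hSv] at h
    simp only [map_add, map_smul, map_neg, LinearMap.add_apply, LinearMap.smul_apply, smul_eq_mul,
      hTT, hswap, halt v, halt (T v)] at h
    linear_combination -h
  exact hne ((mul_eq_zero.mp hq).resolve_left (by positivity))

end DimensionTwo

section SymplecticRepresentations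

open Module Representation
open scoped commutatorElement

/-- The representation `ρ` preserves the symplectic form `ω`, i.e. it takes values in `Sp(V, ω)`. -/
structure IsSymplecticRep {K G V : Type*} [Field K] [Group G] [AddCommGroup V] [Module K V]
    (ρ : Representation K G V) (ω : LinearMap.BilinForm K V) : Prop where
  isAlt : ω.IsAlt
  nondegenerate : ω.Nondegenerate
  apply_apply : ∀ x v w, ω (ρ x v) (ρ x w) = ω v w

/-- The `μ`-eigenspace of the action of a central element, as a subrepresentation. -/
def centralEigenspace {K G V : Type*} [Field K] [Group G] [AddCommGroup V] [Module K V]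
    (ρ : Representation K G V) {a : G} (ha : a ∈ Subgroup.center G) (μ : K) :
    Subrepresentation ρ where
  toSubmodule := End.eigenspace (ρ a) μ
  apply_mem_toSubmodule x v hv := by
    rw [End.mem_eigenspace_iff] at hv ⊢
    rw [← End.mul_apply, ← map_mul, ← Subgroup.mem_center_iff.mp ha x, map_mul, End.mul_apply, hv,
      map_smul]

/-- The elements acting as `1` or `-1`: an involution outside this subgroup has two nonzero
eigenspaces. -/
def signSubgroup {K G V : Type*} [Field K] [Group G] [AddCommGroup V] [Module K V]
    (ρ : Representation K G V) : Subgroup G where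
  carrier := {x | ρ x = 1 ∨ ρ x = -1}
  one_mem' := .inl (map_one ρ)
  mul_mem' := by
    rintro x y (hx | hx) (hy | hy) <;> simp [hx, hy]
  inv_mem' := by
    intro x hx
    have hinv : ρ x⁻¹ * ρ x = 1 := by rw [← map_mul, inv_mul_cancel, map_one]
    rcases hx with hx | hx <;> rw [hx] at hinv
    · exact .inl (by simpa using hinv)
    · exact .inr (by simpa [neg_eq_iff_eq_neg] using hinv)

variable {K G V : Type*} [Field K] [Group G] [AddCommGroup V] [Module K V]
  {ρ : Representation K G V} {ω : LinearMap.BilinForm K V}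

instance signSubgroup_normal : (signSubgroup ρ).Normal where
  conj_mem x hx y := by
    have hinv : ρ y * ρ y⁻¹ = 1 := by rw [← map_mul, mul_inv_cancel, map_one]
    rcases hx with hx | hx
    · exact .inl (by simp [hx, hinv])
    · exact .inr (by simp [hx, hinv])

lemma card_signSubgroup_le (hρ : Function.Injective ρ) : Nat.card (signSubgroup ρ) ≤ 2 := by
  let S : Set (End K V) := {1, -1}
  calc Nat.card (signSubgroup ρ) ≤ Nat.card S :=
        Nat.card_le_card_of_injective (fun x => (⟨ρ x, x.2⟩ : S))
          fun x y hxy => Subtype.ext (hρ (congrArg Subtype.val hxy))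
    _ ≤ 2 := by simpa using Set.ncard_insert_le 1 {(-1 : End K V)}

lemma apply_eq_neg_one_of_mem_signSubgroup (hρ : Function.Injective ρ) {x : G}
    (hx : x ∈ signSubgroup ρ) (hx1 : x ≠ 1) : ρ x = -1 :=
  hx.resolve_left fun h => hx1 (hρ (h.trans (map_one ρ).symm))

lemma apply_pow_eq_neg_one (hρ : Function.Injective ρ) {a : G} {k : ℕ}
    (ha : orderOf a = 2 ^ (k + 1)) (hZ : a ^ 2 ^ k ∈ signSubgroup ρ) : ρ a ^ 2 ^ k = -1 := by
  rw [← map_pow]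
  refine apply_eq_neg_one_of_mem_signSubgroup hρ hZ (pow_ne_one_of_lt_orderOf (by positivity) ?_)
  rw [ha]
  exact Nat.pow_lt_pow_succ one_lt_two

lemma anticommute_of_apply_commutator {a x : G} (hx : ρ ⁅x, a⁆ = -1) :
    ρ x * ρ a = -(ρ a * ρ x) := by
  have h : ρ (⁅x, a⁆ * (a * x)) = ρ (x * a) := congrArg ρ (by group)
  rw [map_mul, hx, neg_one_mul, map_mul, map_mul] at h
  exact h.symm

lemma finrank_eigenspace_eq_of_apply_commutator [FiniteDimensional K V] {a x : G}
    (hx : ρ ⁅x, a⁆ = -1) :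
    finrank K (End.eigenspace (ρ a) 1) = finrank K (End.eigenspace (ρ a) (-1)) := by
  have hanti := anticommute_of_apply_commutator hx
  have hinj : Function.Injective (ρ x) := (ρ.apply_bijective x).injective
  refine le_antisymm (finrank_eigenspace_le_of_anticommute hinj hanti 1) ?_
  exact (finrank_eigenspace_le_of_anticommute hinj hanti (-1)).trans_eq (by rw [neg_neg])

lemma card_le_index_ker_mul_index_ker [Finite G] (hρ : Function.Injective ρ)
    {σ τ : Subrepresentation ρ} (hστ : Codisjoint σ.toSubmodule τ.toSubmodule) :
    Nat.card G ≤ σ.toRepresentation.ker.index * τ.toRepresentation.ker.index := by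
  have hbot : σ.toRepresentation.ker ⊓ τ.toRepresentation.ker = ⊥ := by
    refine (Subgroup.eq_bot_iff_forall _).mpr fun x ⟨hσ, hτ⟩ => hρ ?_
    rw [map_one]
    ext v
    obtain ⟨u, hu, w, hw, rfl⟩ :=
      Submodule.mem_sup.mp (hστ.eq_top ▸ Submodule.mem_top (x := v))
    have hxu : ρ x u = u := congrArg Subtype.val (LinearMap.congr_fun hσ ⟨u, hu⟩)
    have hxw : ρ x w = w := congrArg Subtype.val (LinearMap.congr_fun hτ ⟨w, hw⟩)
    rw [map_add, hxu, hxw, End.one_apply]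
  rw [← Subgroup.index_bot, ← hbot]
  exact Subgroup.index_inf_le

namespace IsSymplecticRep

variable (hω : IsSymplecticRep ρ ω)
include hω

lemma comp {H : Type*} [Group H] (f : H →* G) : IsSymplecticRep (ρ.comp f) ω where
  isAlt := hω.isAlt
  nondegenerate := hω.nondegenerate
  apply_apply x := hω.apply_apply (f x)

lemma quotient_ker : IsSymplecticRep (QuotientGroup.lift ρ.ker ρ le_rfl) ω where
  isAlt := hω.isAlt
  nondegenerate := hω.nondegenerate
  apply_apply := (QuotientGroup.mk'_surjective _).forall.mpr hω.apply_apply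

lemma restrict {σ τ : Subrepresentation ρ} (hστ : IsCompl σ.toSubmodule τ.toSubmodule)
    (horth : ∀ u ∈ σ.toSubmodule, ∀ w ∈ τ.toSubmodule, ω u w = 0) :
    IsSymplecticRep σ.toRepresentation (ω.restrict σ.toSubmodule) where
  isAlt v := hω.isAlt v
  nondegenerate := nondegenerate_restrict_of_isCompl hω.isAlt.isRefl hω.nondegenerate hστ horth
  apply_apply x v w := hω.apply_apply x v w

lemma apply_eq_zero_of_mem_eigenspace {a : G} {μ ν : K} (hμν : μ * ν ≠ 1) {v w : V}
    (hv : v ∈ End.eigenspace (ρ a) μ) (hw : w ∈ End.eigenspace (ρ a) ν) : ω v w = 0 := by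
  rw [End.mem_eigenspace_iff] at hv hw
  have h := hω.apply_apply a v w
  simp only [hv, hw, map_smul, LinearMap.smul_apply, smul_eq_mul] at h
  by_contra h0
  exact hμν (mul_right_cancel₀ h0 (by linear_combination h))

lemma exists_finrank_eigenspace [FiniteDimensional K V] (h2 : (2 : K) ≠ 0) {a : G}
    (ha : a ^ 2 = 1) (haZ : a ∉ signSubgroup ρ) {g : ℕ} (hg : finrank K V = 2 * g) :
    ∃ m n, m ≠ 0 ∧ n ≠ 0 ∧ m + n = g ∧ finrank K (End.eigenspace (ρ a) 1) = 2 * m ∧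
      finrank K (End.eigenspace (ρ a) (-1)) = 2 * n := by
  have hcompl := isCompl_eigenspace_one_neg_one h2 (T := ρ a) (by rw [← map_mul, ← sq, ha, map_one])
  have hneg : (1 : K) * -1 ≠ 1 := fun h => h2 (by linear_combination -h)
  have heven {μ ν : K} (hμν : μ * ν ≠ 1)
      (hcompl : IsCompl (End.eigenspace (ρ a) μ) (End.eigenspace (ρ a) ν)) :
      Even (finrank K (End.eigenspace (ρ a) μ)) :=
    even_finrank_of_isAlt h2 (fun v => hω.isAlt v)
      (nondegenerate_restrict_of_isCompl hω.isAlt.isRefl hω.nondegenerate hcompl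
        fun _ hv _ hw => hω.apply_eq_zero_of_mem_eigenspace hμν hv hw)
  obtain ⟨m, hm⟩ := (heven hneg hcompl).two_dvd
  obtain ⟨n, hn⟩ := (heven (by rwa [mul_comm]) hcompl.symm).two_dvd
  have hsum := Submodule.finrank_add_eq_of_isCompl hcompl
  refine ⟨m, n, ?_, ?_, by lia, hm, hn⟩
  · rintro rfl
    have htop := eq_top_of_bot_isCompl (Submodule.finrank_eq_zero.mp hm ▸ hcompl)
    exact haZ (.inr (by simpa using eigenspace_eq_top_iff.mp htop))
  · rintro rfl
    have htop := eq_top_of_isCompl_bot (Submodule.finrank_eq_zero.mp hn ▸ hcompl)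
    exact haZ (.inl (by simpa using eigenspace_eq_top_iff.mp htop))

end IsSymplecticRep

lemma IsSymplecticRep.mem_center_of_finrank_eq_two [LinearOrder K] [IsStrictOrderedRing K]
    (hω : IsSymplecticRep ρ ω) (hρ : Function.Injective ρ) (hdim : finrank K V = 2)
    {A : Subgroup G} [A.Normal] [IsMulCommutative A]
    (hZ : ∀ b ∈ A, b ^ 2 = 1 → b ∈ signSubgroup ρ) {a : G} (haA : a ∈ A) (ha : ρ a ^ 2 = -1) :
    a ∈ Subgroup.center G := by
  have hsq (x : G) : x * a ^ 2 * x⁻¹ = a ^ 2 := by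
    refine mul_inv_eq_iff_eq_mul.mpr (hρ ?_)
    rw [map_mul, map_mul, map_pow, ha, mul_neg_one, neg_one_mul]
  refine Subgroup.mem_center_iff.mpr fun x => commutatorElement_eq_one_iff_mul_comm.mp ?_
  have hconj : x * a * x⁻¹ ∈ A := Subgroup.Normal.conj_mem ‹_› a haA x
  have hcomm : Commute (x * a * x⁻¹) a := setLike_mul_comm hconj haA
  have hone : ⁅x, a⁆ ^ 2 = 1 := by
    rw [commutatorElement_def, hcomm.inv_right.mul_pow, conj_pow, hsq, inv_pow, mul_inv_cancel]
  by_contra hne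
  have hneg := apply_eq_neg_one_of_mem_signSubgroup hρ
    (hZ _ (A.mul_mem hconj (A.inv_mem haA)) hone) hne
  exact not_anticommute_of_finrank_eq_two hdim hω.isAlt hω.nondegenerate (hω.apply_apply x)
    ((sq _).symm.trans ha) (anticommute_of_apply_commutator hneg)

end SymplecticRepresentations

section TwoGroups

open Module Representation
open scoped commutatorElement

/-- The exponent `c(g) = 2 * g + v₂(g!)` of `2` in the bound for `Sp(2g, ℚ)`; by Legendre's formula
`v₂(g!)` is the sum of the `⌊g / 2 ^ i⌋` for `i ≥ 1`. -/
def spExponent (g : ℕ) : ℕ := 2 * g + padicValNat 2 g.factorial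

lemma spExponent_eq_sum (g : ℕ) :
    spExponent g = 2 * g + ∑ i ∈ Finset.range (g + 1), g / 2 ^ (i + 1) := by
  have hlog : Nat.log 2 g < g + 2 := Nat.lt_add_right 1 (Nat.lt_succ_of_le (Nat.log_le_self 2 g))
  rw [spExponent, padicValNat_factorial hlog, Finset.sum_Ico_eq_sum_range]
  simp only [add_comm 1, Nat.add_succ_sub_one]

lemma spExponent_add_le (m n : ℕ) : spExponent m + spExponent n ≤ spExponent (m + n) := by
  have hval := (padicValNat_dvd_iff_le (p := 2) (m + n).factorial_ne_zero).mp
    (pow_padicValNat_dvd.trans (Nat.factorial_mul_factorial_dvd_factorial_add m n))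
  rw [padicValNat.mul m.factorial_ne_zero n.factorial_ne_zero] at hval
  unfold spExponent
  lia

lemma spExponent_add_self {m : ℕ} (hm : m ≠ 0) :
    spExponent m + spExponent m + 1 ≤ spExponent (m + m) := by
  have hmul := padicValNat_factorial_mul (p := 2) m
  have hlt := padicValNat_factorial_lt_of_ne_zero 2 hm
  rw [two_mul] at hmul
  unfold spExponent
  lia

lemma two_mul_add_one_le_spExponent {g k : ℕ} (hg : 2 ≤ g) (hk : 2 ^ k ≤ 2 * g) :
    2 * k + 1 ≤ spExponent g := by
  have hval : 1 ≤ padicValNat 2 g.factorial :=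
    one_le_padicValNat_of_dvd g.factorial_ne_zero (Nat.dvd_factorial two_pos hg)
  have hpow : 2 * k ≤ 2 ^ k := by
    cases k with
    | zero => simp
    | succ k =>
      have := Nat.lt_two_pow_self (n := k)
      rw [pow_succ]
      lia
  unfold spExponent
  lia

universe u v

/-- The bound `|G| ≤ 2 ^ c(g)` for all finite `2`-groups `G` acting faithfully on a symplectic
`ℚ`-vector space of dimension `2 * g`. -/
def SpTwoGroupBound (g : ℕ) : Prop :=
  ∀ (G : Type u) (V : Type v) [Group G] [Finite G] [AddCommGroup V] [Module ℚ V]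
    [FiniteDimensional ℚ V] (ρ : Representation ℚ G V) (ω : LinearMap.BilinForm ℚ V),
    IsPGroup 2 G → Function.Injective ρ → IsSymplecticRep ρ ω → finrank ℚ V = 2 * g →
      Nat.card G ≤ 2 ^ spExponent g

variable {G : Type u} {V : Type v} [Group G] [Finite G] [AddCommGroup V] [Module ℚ V]
  [FiniteDimensional ℚ V] {ρ : Representation ℚ G V} {ω : LinearMap.BilinForm ℚ V} {g : ℕ}

lemma SpTwoGroupBound.index_ker_le (h : SpTwoGroupBound.{u, v} g) (hG : IsPGroup 2 G)
    (hω : IsSymplecticRep ρ ω) (hg : finrank ℚ V = 2 * g) :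
    ρ.ker.index ≤ 2 ^ spExponent g := by
  have hinj : Function.Injective (QuotientGroup.lift ρ.ker ρ le_rfl) := by
    rw [← MonoidHom.ker_eq_bot_iff, QuotientGroup.ker_lift, QuotientGroup.map_mk'_self]
  exact h (G ⧸ ρ.ker) V _ ω (hG.to_quotient _) hinj hω.quotient_ker hg

lemma card_le_of_mem_center {m n : ℕ} (hm : SpTwoGroupBound.{u, v} m)
    (hn : SpTwoGroupBound.{u, v} n) (hG : IsPGroup 2 G) (hρ : Function.Injective ρ)
    (hω : IsSymplecticRep ρ ω) {a : G} (ha : a ^ 2 = 1) (hcenter : a ∈ Subgroup.center G)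
    (hdim : finrank ℚ (End.eigenspace (ρ a) 1) = 2 * m)
    (hdim_neg : finrank ℚ (End.eigenspace (ρ a) (-1)) = 2 * n) :
    Nat.card G ≤ 2 ^ (spExponent m + spExponent n) := by
  let σ := centralEigenspace ρ hcenter 1
  let τ := centralEigenspace ρ hcenter (-1)
  have hcompl : IsCompl σ.toSubmodule τ.toSubmodule :=
    isCompl_eigenspace_one_neg_one two_ne_zero (by rw [← map_mul, ← sq, ha, map_one])
  have hσ := hω.restrict hcompl
    fun _ hv _ hw => hω.apply_eq_zero_of_mem_eigenspace (by norm_num) hv hw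
  have hτ := hω.restrict hcompl.symm
    fun _ hv _ hw => hω.apply_eq_zero_of_mem_eigenspace (by norm_num) hv hw
  calc Nat.card G ≤ σ.toRepresentation.ker.index * τ.toRepresentation.ker.index :=
        card_le_index_ker_mul_index_ker hρ hcompl.codisjoint
    _ ≤ 2 ^ spExponent m * 2 ^ spExponent n :=
        Nat.mul_le_mul (hm.index_ker_le hG hσ hdim) (hn.index_ker_le hG hτ hdim_neg)
    _ = 2 ^ (spExponent m + spExponent n) := (pow_add 2 _ _).symm

lemma card_le_of_exists_involution (ih : ∀ m < g, SpTwoGroupBound.{u, v} m) (hG : IsPGroup 2 G)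
    (hρ : Function.Injective ρ) (hω : IsSymplecticRep ρ ω) (hdim : finrank ℚ V = 2 * g) {a : G}
    (ha : a ^ 2 = 1) (haZ : a ∉ signSubgroup ρ) (hcommutator : ∀ x : G, ⁅x, a⁆ ∈ signSubgroup ρ) :
    Nat.card G ≤ 2 ^ spExponent g := by
  obtain ⟨m, n, hm, hn, rfl, hdim_one, hdim_neg⟩ :=
    hω.exists_finrank_eigenspace two_ne_zero ha haZ hdim
  let C := Subgroup.centralizer {a}
  have haC : a ∈ C := Subgroup.mem_centralizer_singleton_iff.mpr rfl
  have hC : Nat.card C ≤ 2 ^ (spExponent m + spExponent n) := by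
    refine card_le_of_mem_center (ρ := ρ.comp C.subtype) (a := ⟨a, haC⟩) (ih m (by lia))
      (ih n (by lia)) (hG.to_subgroup C) (hρ.comp C.subtype_injective) (hω.comp C.subtype)
      (Subtype.ext ha) ?_ hdim_one hdim_neg
    exact Subgroup.mem_center_iff.mpr fun x =>
      Subtype.ext (Subgroup.mem_centralizer_singleton_iff.mp x.2)
  by_cases hcomm : ∀ x : G, ⁅x, a⁆ = 1
  · have htop : C = ⊤ := (Subgroup.eq_top_iff' C).mpr fun x =>
      Subgroup.mem_centralizer_singleton_iff.mpr
        (commutatorElement_eq_one_iff_mul_comm.mp (hcomm x))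
    rw [htop, Subgroup.card_top] at hC
    exact hC.trans (Nat.pow_le_pow_right two_pos (spExponent_add_le m n))
  · obtain ⟨x, hx⟩ := not_forall.mp hcomm
    have hmn := finrank_eigenspace_eq_of_apply_commutator
      (apply_eq_neg_one_of_mem_signSubgroup hρ (hcommutator x) hx)
    obtain rfl : m = n := by lia
    calc Nat.card G = Nat.card C * C.index := C.card_mul_index.symm
      _ ≤ 2 ^ (spExponent m + spExponent m) * 2 :=
        Nat.mul_le_mul hC
          ((index_centralizer_singleton_le hcommutator).trans (card_signSubgroup_le hρ))
      _ = 2 ^ (spExponent m + spExponent m + 1) := (pow_succ 2 _).symm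
      _ ≤ 2 ^ spExponent (m + m) := Nat.pow_le_pow_right two_pos (spExponent_add_self hm)

lemma card_le_of_isCyclic (hg : g ≠ 0) (hG : IsPGroup 2 G) (hρ : Function.Injective ρ)
    (hω : IsSymplecticRep ρ ω) (hdim : finrank ℚ V = 2 * g) (A : Subgroup G) [A.Normal]
    [hcyclic : IsCyclic A] (hA : Subgroup.centralizer (A : Set G) = A)
    (hZ : ∀ a ∈ A, a ^ 2 = 1 → a ∈ signSubgroup ρ) : Nat.card G ≤ 2 ^ spExponent g := by
  have hcard := card_le_card_mul_totient A hA
  obtain ⟨j, hj⟩ := (hG.to_subgroup A).exists_card_eq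
  rcases j with - | k
  · rw [hj, pow_zero, Nat.totient_one] at hcard
    exact hcard.trans Nat.one_le_two_pow
  rw [hj, Nat.totient_prime_pow_succ Nat.prime_two] at hcard
  obtain ⟨a, rfl⟩ := Subgroup.isCyclic_iff_exists_zpowers_eq_top A |>.mp hcyclic
  rw [Nat.card_zpowers] at hj
  have hneg : ρ a ^ 2 ^ k = -1 := apply_pow_eq_neg_one hρ hj <|
    hZ _ (Subgroup.npow_mem_zpowers a _) (by rw [← pow_mul, ← pow_succ, ← hj, pow_orderOf_eq_one])
  have : Nontrivial V := nontrivial_of_finrank_pos (R := ℚ) (by lia)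
  have hk : 2 ^ k ≤ 2 * g := hdim ▸ two_pow_le_finrank_of_pow_eq_neg_one hneg
  rcases (Nat.one_le_iff_ne_zero.mpr hg).eq_or_lt with rfl | hg
  · have hexponent : 2 ≤ spExponent 1 := Nat.le_add_right 2 _
    refine le_trans ?_ (Nat.pow_le_pow_right two_pos hexponent)
    have hk_one : k ≤ 1 := (Nat.pow_le_pow_iff_right one_lt_two).mp (hk.trans_eq (by norm_num))
    rcases Nat.le_one_iff_eq_zero_or_eq_one.mp hk_one with rfl | rfl
    · exact hcard.trans (by norm_num)
    · have hcenter := hω.mem_center_of_finrank_eq_two hρ hdim hZ (Subgroup.mem_zpowers a) hneg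
      rw [card_eq_orderOf_of_mem_center hcenter hA, hj]
  · calc Nat.card G ≤ 2 ^ (2 * k + 1) := hcard.trans_eq (by ring)
      _ ≤ 2 ^ spExponent g := Nat.pow_le_pow_right two_pos (two_mul_add_one_le_spExponent hg hk)

theorem spTwoGroupBound (g : ℕ) : SpTwoGroupBound.{u, v} g := by
  induction g using Nat.strong_induction_on with
  | _ g ih =>
    intro G V _ _ _ _ _ ρ ω hG hρ hω hdim
    rcases eq_or_ne g 0 with rfl | hg
    · have : Subsingleton V := finrank_zero_iff.mp hdim
      have : Subsingleton G := hρ.subsingleton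
      rw [Nat.card_of_subsingleton (1 : G)]
      exact Nat.one_le_two_pow
    · rcases exists_pow_eq_one_or_exists_isCyclic hG (signSubgroup ρ) (card_signSubgroup_le hρ) with
        ⟨a, ha, haZ, hcommutator⟩ | ⟨A, _, _, hA, hZ⟩
      · exact card_le_of_exists_involution ih hG hρ hω hdim ha haZ hcommutator
      · exact card_le_of_isCyclic hg hG hρ hω hdim A hA hZ

end TwoGroups

section CardinalityBound

open Module

variable {G V : Type*} [Group G] [Finite G] [AddCommGroup V] [Module ℚ V]
  [FiniteDimensional ℚ V] {ρ : Representation ℚ G V}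

lemma factorization_card_le {p : ℕ} (hp : p.Prime) (hρ : Function.Injective ρ) :
    (Nat.card G).factorization p ≤
      ∑ i ∈ Finset.range (finrank ℚ V + 1), finrank ℚ V / ((p - 1) * p ^ i) := by
  have : Fact p.Prime := ⟨hp⟩
  obtain ⟨P⟩ : Nonempty (Sylow p G) := inferInstance
  set m := finrank ℚ V / (p - 1) with hm
  have hdvd := card_dvd_of_isPGroup (ρ := ρ.comp (P : Subgroup G).subtype) hp P.isPGroup'
    (hρ.comp P.1.subtype_injective)
  rw [P.card_eq_multiplicity, ← hm, padicValNat_dvd_iff_le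
    (mul_ne_zero (pow_ne_zero _ hp.ne_zero) m.factorial_ne_zero),
    padicValNat.mul (pow_ne_zero _ hp.ne_zero) m.factorial_ne_zero, padicValNat.prime_pow] at hdvd
  have hlog : Nat.log p m < finrank ℚ V + 1 :=
    Nat.lt_succ_of_le ((Nat.log_le_self p m).trans (Nat.div_le_self _ _))
  calc (Nat.card G).factorization p ≤ m + padicValNat p m.factorial := hdvd
    _ = m / p ^ 0 + ∑ i ∈ Finset.Ico 1 (finrank ℚ V + 1), m / p ^ i := by
      rw [padicValNat_factorial hlog, pow_zero, Nat.div_one]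
    _ = ∑ i ∈ Finset.range (finrank ℚ V + 1), finrank ℚ V / ((p - 1) * p ^ i) := by
      simp_rw [← Nat.div_div_eq_div_mul, ← hm]
      rw [Finset.range_eq_Ico, Finset.sum_eq_sum_Ico_succ_bot (Nat.succ_pos _)]

variable {ω : LinearMap.BilinForm ℚ V}

lemma factorization_two_card_le {g : ℕ} (hρ : Function.Injective ρ) (hω : IsSymplecticRep ρ ω)
    (hdim : finrank ℚ V = 2 * g) : (Nat.card G).factorization 2 ≤ spExponent g := by
  obtain ⟨P⟩ : Nonempty (Sylow 2 G) := inferInstance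
  have hcard := spTwoGroupBound g P V (ρ.comp (P : Subgroup G).subtype) ω P.isPGroup'
    (hρ.comp P.1.subtype_injective) (hω.comp _) hdim
  rwa [P.card_eq_multiplicity, Nat.pow_le_pow_iff_right one_lt_two] at hcard

theorem finite_subgroup_Sp_card_dvd_general {g : ℕ} (hρ : Function.Injective ρ)
    (hω : IsSymplecticRep ρ ω) (hdim : finrank ℚ V = 2 * g) :
    Nat.card G ∣
      2 ^ (2 * g + ∑ i ∈ Finset.range (g + 1), g / 2 ^ (i + 1)) *
        ∏ p ∈ (Finset.range (2 * g + 2)).filter (fun p => p.Prime ∧ Odd p),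
          p ^ (∑ i ∈ Finset.range (2 * g + 1), 2 * g / ((p - 1) * p ^ i)) := by
  refine (Nat.dvd_iff_prime_pow_dvd_dvd _ _).mpr fun p k hp hdvd => ?_
  have hk := (hp.pow_dvd_iff_le_factorization Nat.card_pos.ne').mp hdvd
  rcases hp.eq_two_or_odd' with rfl | hodd
  · rw [← spExponent_eq_sum]
    exact (pow_dvd_pow 2 (hk.trans (factorization_two_card_le hρ hω hdim))).mul_right _
  · have hk_sum := hdim ▸ hk.trans (factorization_card_le hp hρ)
    rcases lt_or_ge p (2 * g + 2) with hlt | hge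
    · have hmem : p ∈ (Finset.range (2 * g + 2)).filter (fun p => p.Prime ∧ Odd p) := by
        simp [hlt, hp, hodd]
      refine (pow_dvd_pow p hk_sum).trans (Dvd.dvd.mul_left ?_ _)
      exact Finset.dvd_prod_of_mem (fun p => p ^ _) hmem
    · have hzero (i : ℕ) : 2 * g / ((p - 1) * p ^ i) = 0 :=
        Nat.div_eq_of_lt (lt_of_lt_of_le (by lia : 2 * g < p - 1)
          (Nat.le_mul_of_pos_right _ (pow_pos hp.pos i)))
      have hk_zero : k = 0 := by
        rwa [Finset.sum_eq_zero fun i _ => hzero i, Nat.le_zero] at hk_sum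
      rw [hk_zero, pow_zero]
      exact one_dvd _

end CardinalityBound

section SymplecticGroup

variable {g : ℕ} (H : Subgroup (Matrix.symplecticGroup (Fin g) ℚ))

/-- The natural representation of a group of symplectic matrices. -/
def symplecticRep : Representation ℚ H (Fin g ⊕ Fin g → ℚ) :=
  (Matrix.toLinAlgEquiv' : Matrix (Fin g ⊕ Fin g) (Fin g ⊕ Fin g) ℚ ≃ₐ[ℚ] _).toMonoidHom.comp
    ((Matrix.symplecticGroup (Fin g) ℚ).subtype.comp H.subtype)

lemma symplecticRep_injective : Function.Injective (symplecticRep H) :=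
  Matrix.toLinAlgEquiv'.injective.comp (Subtype.val_injective.comp Subtype.val_injective)

lemma isSymplecticRep_symplecticRep :
    IsSymplecticRep (symplecticRep H) (Matrix.toBilin' (Matrix.J (Fin g) ℚ)) where
  isAlt v := by
    rw [Matrix.toBilin'_apply', ← self_eq_neg]
    calc v ⬝ᵥ Matrix.J (Fin g) ℚ *ᵥ v = v ⬝ᵥ (Matrix.J (Fin g) ℚ)ᵀ *ᵥ v := by
          rw [Matrix.mulVec_transpose, Matrix.dotProduct_mulVec, dotProduct_comm]
      _ = -(v ⬝ᵥ Matrix.J (Fin g) ℚ *ᵥ v) := by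
          rw [Matrix.J_transpose, Matrix.neg_mulVec, dotProduct_neg]
  nondegenerate := LinearMap.BilinForm.nondegenerate_toBilin'_of_det_ne_zero' _
    (Matrix.isUnit_det_J (Fin g) ℚ).ne_zero
  apply_apply x v w := by
    have h := Matrix.toBilin'_comp (Matrix.J (Fin g) ℚ) x.1.1 x.1.1
    rw [SymplecticGroup.mem_iff'.mp x.1.2] at h
    exact LinearMap.congr_fun₂ h v w

end SymplecticGroup

/-- Divisibility direction of the remark at the end of Section 3: the order of any
finite subgroup of `Sp(2g, ℚ)` divides
`2^{2g + ∑_{i≥1}⌊g/2^i⌋} · ∏_{odd primes p ≤ 2g+1} p^{∑_{i≥0}⌊2g/((p-1)p^i)⌋}`. -/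
theorem finite_subgroup_Sp_card_dvd
    (g : ℕ) (hg : 1 ≤ g) (H : Subgroup (Matrix.symplecticGroup (Fin g) ℚ)) [Finite H] :
    Nat.card H ∣
      2 ^ (2 * g + ∑ i ∈ Finset.range (g + 1), g / 2 ^ (i + 1)) *
        ∏ p ∈ (Finset.range (2 * g + 2)).filter (fun p => p.Prime ∧ Odd p),
          p ^ (∑ i ∈ Finset.range (2 * g + 1), 2 * g / ((p - 1) * p ^ i)) := by
  exact finite_subgroup_Sp_card_dvd_general (symplecticRep_injective H)
    (isSymplecticRep_symplecticRep H) (by simp [two_mul])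
end
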